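/- arXiv:2002.04771 — 2 statements merged into one kernel-verified Lean document; each statement's English description precedes it below -/
import Mathlib

section
/- The set of copies for G is a Gδ subset of the power set of U with the product topology; concretely, the set {χ : U → Bool | {x ∈ U : χ(x) = true} is a copy for G} is a Gδ subset of the space U → Bool, where Bool is discrete and U → Bool carries the product topology. -/
/-- `f` is adherent to the subgroup `G` of permutations of `U`:
for every finite set `F` there is `g ∈ G` agreeing with `f` on `F`. -/
def IsAdherent {U : Type*} (G : Subgroup (Equiv.Perm U)) (f : U → U) : Prop :=
  ∀ F : Finset U, ∃ g ∈ G, ∀ x ∈ F, f x = g x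

/-- `C` is a copy for the group `G`: the range of a function adherent to `G`. -/
def IsCopy {U : Type*} (G : Subgroup (Equiv.Perm U)) (C : Set U) : Prop :=
  ∃ f : U → U, IsAdherent G f ∧ Set.range f = C

/-!
A set `C` is a copy exactly when it has the following one-point extension property: whenever `g ∈ G`
maps a finite set `F` into `C`, its restriction to `F` extends to each further point `u` inside `C`.
If `C` is the range of an adherent `f`, one pulls `g` back along `f`: there is `k ∈ G` such that
`k⁻¹ ∘ g` is a section over `F` of `f`, and any `k' ∈ G` close enough to `f` gives the extension
`k' * k⁻¹ * g`. Conversely, a back-and-forth construction produces an adherent function as the limit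
of finite approximations. For fixed `F`, `u` and `g`, the extension property is an open condition on
`C` that depends on `g` only through its restriction to `F`, and there are countably many of those.
-/

section

variable {U : Type*} {G : Subgroup (Equiv.Perm U)} {C : Set U}

/-- The one-point extension property of `C` with respect to `G`: the restriction to a finite set of
an element of `G` that maps this set into `C` can be extended, by an element of `G`, to any further
point with value in `C`. -/
def HasExtensionProperty (G : Subgroup (Equiv.Perm U)) (C : Set U) : Prop :=
  ∀ g ∈ G, ∀ F : Finset U, Set.MapsTo g F C → ∀ u, ∃ h ∈ G, Set.EqOn h g F ∧ h u ∈ C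

theorem IsAdherent.exists_apply_inv_apply_eq {f : U → U} (hf : IsAdherent G f) {Y : Finset U}
    (hY : ∀ y ∈ Y, y ∈ Set.range f) : ∃ k ∈ G, ∀ y ∈ Y, f (k⁻¹ y) = y := by
  classical
  choose! s hs using hY
  obtain ⟨k, hkG, hk⟩ := hf (Y.image s)
  refine ⟨k, hkG, fun y hy => ?_⟩
  have hky : k (s y) = y := by rw [← hk _ (Finset.mem_image_of_mem s hy), hs y hy]
  rw [Equiv.Perm.inv_eq_iff_eq.2 hky.symm, hs y hy]

theorem IsCopy.hasExtensionProperty (hC : IsCopy G C) : HasExtensionProperty G C := by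
  classical
  obtain ⟨f, hf, rfl⟩ := hC
  intro g hg F hgF u
  obtain ⟨k, hkG, hk⟩ := hf.exists_apply_inv_apply_eq (Finset.forall_mem_image.2 hgF)
  obtain ⟨k', hk'G, hk'⟩ := hf ((insert u F).image (k⁻¹ * g))
  have hfk' : ∀ x ∈ insert u F, (k' * k⁻¹ * g) x = f (k⁻¹ (g x)) := fun x hx =>
    (hk' _ (Finset.mem_image_of_mem _ hx)).symm
  refine ⟨k' * k⁻¹ * g, G.mul_mem (G.mul_mem hk'G (G.inv_mem hkG)) hg, fun x hx => ?_, ?_⟩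
  · rw [hfk' x (Finset.mem_insert_of_mem hx), hk _ (Finset.mem_image_of_mem g hx)]
  · rw [hfk' u (Finset.mem_insert_self u F)]
    exact Set.mem_range_self _

/-- A finite approximation to an adherent function with range `C`: the restriction to the finite set
`dom` of an element of `G` that maps `dom` into `C`. The element `perm` is part of the data, but
only its values on `dom` matter for the order, so this is a preorder and not a partial order. -/
structure FiniteApprox (G : Subgroup (Equiv.Perm U)) (C : Set U) where
  dom : Finset U
  perm : Equiv.Perm U
  perm_mem : perm ∈ G
  mapsTo : Set.MapsTo perm dom C

namespace FiniteApprox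

instance : Preorder (FiniteApprox G C) where
  le s t := s.dom ⊆ t.dom ∧ Set.EqOn t.perm s.perm s.dom
  le_refl s := ⟨subset_rfl, Set.eqOn_refl _ _⟩
  le_trans _ _ _ hst htr := ⟨hst.1.trans htr.1, (htr.2.mono hst.1).trans hst.2⟩

instance : Inhabited (FiniteApprox G C) :=
  ⟨⟨∅, 1, G.one_mem, by simp [Set.MapsTo]⟩⟩

theorem exists_le_perm_eq (s : FiniteApprox G C) {h : Equiv.Perm U} (hG : h ∈ G)
    (hs : Set.EqOn h s.perm s.dom) {u : U} (hu : h u ∈ C) :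
    ∃ t, s ≤ t ∧ t.perm = h ∧ u ∈ t.dom := by
  classical
  have hmaps : Set.MapsTo h (insert u s.dom : Finset U) C := by
    rw [Finset.coe_insert, Set.insert_eq, Set.mapsTo_union, Set.mapsTo_singleton]
    exact ⟨hu, s.mapsTo.congr hs.symm⟩
  exact ⟨⟨insert u s.dom, h, hG, hmaps⟩, ⟨Finset.subset_insert u s.dom, hs⟩, rfl,
    Finset.mem_insert_self u s.dom⟩

theorem exists_le_mem_dom (hC : HasExtensionProperty G C) (s : FiniteApprox G C) (u : U) :
    ∃ t, s ≤ t ∧ u ∈ t.dom := by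
  obtain ⟨h, hG, hs, hu⟩ := hC s.perm s.perm_mem s.dom s.mapsTo u
  obtain ⟨t, hst, -, hut⟩ := s.exists_le_perm_eq hG hs hu
  exact ⟨t, hst, hut⟩

theorem exists_le_mem_image (s : FiniteApprox G C) {c : U} (hc : c ∈ C) :
    ∃ t, s ≤ t ∧ c ∈ t.perm '' t.dom := by
  obtain ⟨t, hst, ht, hct⟩ := s.exists_le_perm_eq s.perm_mem (Set.eqOn_refl _ _)
    (u := s.perm⁻¹ c) (by simpa using hc)
  exact ⟨t, hst, s.perm⁻¹ c, hct, by simp [ht]⟩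

/-- The cofinal set of approximations that are defined at `u`. -/
def definedAt (hC : HasExtensionProperty G C) (u : U) : Order.Cofinal (FiniteApprox G C) where
  carrier := {s | u ∈ s.dom}
  isCofinal s := (s.exists_le_mem_dom hC u).imp fun _ => And.symm

/-- The cofinal set of approximations that take the value `c`. -/
def attaining (c : C) : Order.Cofinal (FiniteApprox G C) where
  carrier := {s | (c : U) ∈ s.perm '' s.dom}
  isCofinal s := (s.exists_le_mem_image c.2).imp fun _ => And.symm

theorem exists_ideal [Countable U] (hC : HasExtensionProperty G C) :
    ∃ I : Order.Ideal (FiniteApprox G C),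
      (∀ u, ∃ s ∈ I, u ∈ s.dom) ∧ ∀ c ∈ C, ∃ s ∈ I, c ∈ s.perm '' s.dom := by
  cases nonempty_encodable (U ⊕ C)
  let 𝒟 : U ⊕ C → Order.Cofinal (FiniteApprox G C) := Sum.elim (definedAt hC) attaining
  refine ⟨Order.idealOfCofinals default 𝒟, fun u => ?_, fun c hc => ?_⟩
  · obtain ⟨s, hs, hsI⟩ := Order.cofinal_meets_idealOfCofinals default 𝒟 (Sum.inl u)
    exact ⟨s, hsI, hs⟩
  · obtain ⟨s, hs, hsI⟩ := Order.cofinal_meets_idealOfCofinals default 𝒟 (Sum.inr ⟨c, hc⟩)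
    exact ⟨s, hsI, hs⟩

theorem exists_isAdherent_eqOn (I : Order.Ideal (FiniteApprox G C))
    (hI : ∀ u, ∃ s ∈ I, u ∈ s.dom) :
    ∃ f, IsAdherent G f ∧ ∀ s ∈ I, Set.EqOn f s.perm s.dom := by
  classical
  choose s hsI hs using hI
  have heq : ∀ t ∈ I, Set.EqOn (fun u => (s u).perm u) t.perm t.dom := fun t ht u hu => by
    obtain ⟨r, -, hsr, htr⟩ := I.directed _ (hsI u) _ ht
    exact (hsr.2 (hs u)).symm.trans (htr.2 hu)
  refine ⟨fun u => (s u).perm u, fun F => ?_, heq⟩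
  obtain ⟨⟨t, ht⟩, hFt⟩ := I.directed.directed_val.finset_le (hι := I.nonempty.to_subtype)
    (F.image fun u => ⟨s u, hsI u⟩)
  exact ⟨t.perm, t.perm_mem, fun u hu =>
    heq t ht ((hFt _ (Finset.mem_image_of_mem _ hu)).1 (hs u))⟩

end FiniteApprox

theorem HasExtensionProperty.isCopy [Countable U] (hC : HasExtensionProperty G C) :
    IsCopy G C := by
  obtain ⟨I, hdom, himage⟩ := FiniteApprox.exists_ideal hC
  obtain ⟨f, hf, hfI⟩ := FiniteApprox.exists_isAdherent_eqOn I hdom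
  refine ⟨f, hf, Set.Subset.antisymm (Set.range_subset_iff.2 fun u => ?_) fun c hc => ?_⟩
  · obtain ⟨s, hsI, hu⟩ := hdom u
    exact hfI s hsI hu ▸ s.mapsTo hu
  · obtain ⟨s, hsI, x, hx, rfl⟩ := himage c hc
    exact ⟨x, hfI s hsI hx⟩

theorem isCopy_iff_hasExtensionProperty [Countable U] : IsCopy G C ↔ HasExtensionProperty G C :=
  ⟨IsCopy.hasExtensionProperty, HasExtensionProperty.isCopy⟩

/-- The sets (given by their characteristic functions) that, if they contain the range of the finite
partial map `p`, contain the value at `u` of some extension of `p` in `G`. -/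
def extendingSets (G : Subgroup (Equiv.Perm U)) {F : Finset U} (p : F → U) (u : U) :
    Set (U → Bool) :=
  {χ | (∀ x, χ (p x) = true) → ∃ h ∈ G, (∀ x : F, h x = p x) ∧ χ (h u) = true}

theorem isOpen_extendingSets {F : Finset U} (p : F → U) (u : U) :
    IsOpen (extendingSets G p u) := by
  have hclopen (y : U) : IsClopen {χ : U → Bool | χ y = true} :=
    (isClopen_discrete {true}).preimage (continuous_apply y)
  have hdomain : IsClosed {χ : U → Bool | ∀ x, χ (p x) = true} := by
    simpa only [Set.ofPred_forall] using isClosed_iInter fun x => (hclopen (p x)).isClosed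
  have hvalue : IsOpen {χ : U → Bool | ∃ h ∈ G, (∀ x : F, h x = p x) ∧ χ (h u) = true} := by
    simp only [Set.ofPred_exists, Set.ofPred_and]
    exact isOpen_iUnion fun h => isOpen_const.inter (isOpen_const.inter (hclopen (h u)).isOpen)
  simpa only [extendingSets, imp_iff_not_or] using! hdomain.isOpen_compl.union hvalue

theorem setOfPred_hasExtensionProperty_eq_iInter (G : Subgroup (Equiv.Perm U)) :
    {χ : U → Bool | HasExtensionProperty G {x | χ x = true}} =
      ⋂ (F : Finset U) (u : U), ⋂ p ∈ Set.range fun (g : G) (x : F) => (g : Equiv.Perm U) x,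
        extendingSets G p u := by
  ext χ
  simp only [Set.biInter_range, Set.mem_iInter]
  refine ⟨fun hχ F u g hg => ?_, fun hχ g hg F hF u => ?_⟩
  · obtain ⟨h, hG, heq, hu⟩ := hχ g g.2 F (fun x hx => hg ⟨x, hx⟩) u
    exact ⟨h, hG, fun x => heq x.2, hu⟩
  · obtain ⟨h, hG, heq, hu⟩ := hχ F u ⟨g, hg⟩ fun x => hF x.2
    exact ⟨h, hG, fun x hx => heq ⟨x, hx⟩, hu⟩

theorem isGδ_setOfPred_hasExtensionProperty [Countable U] (G : Subgroup (Equiv.Perm U)) :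
    IsGδ {χ : U → Bool | HasExtensionProperty G {x | χ x = true}} := by
  rw [setOfPred_hasExtensionProperty_eq_iInter]
  exact .iInter fun F => .iInter fun u =>
    .biInter_of_isOpen (Set.to_countable _) fun p _ => isOpen_extendingSets p u

end

/-- Theorem: the set of copies for `G` is a Gδ subset of the powerset of `U`, identified
with the product space `U → Bool` (with `Bool` discrete). -/
theorem isGδ_copies {U : Type*} [Countable U] [Infinite U]
    (G : Subgroup (Equiv.Perm U)) :
    IsGδ {χ : U → Bool | IsCopy G {x : U | χ x = true}} := by
  simpa only [isCopy_iff_hasExtensionProperty] using isGδ_setOfPred_hasExtensionProperty G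
end

section
/- Let F be a finite subset of U and x ∈ U, and suppose the typeset G⟨F ▸ x⟩ (the orbit of x under the pointwise stabilizer G⟨F⟩) is finite. Then (1) for every function f adherent to G, the image f[G⟨F ▸ x⟩] equals the orbit of f(x) under the pointwise stabilizer G⟨f[F]⟩; and (2) G⟨F ▸ x⟩ is contained in every copy C for G with F ⊆ C. -/
/-!
Suppose the typeset of `⟨F ▸ x⟩` is finite. Then an adherent `f` agrees on both `F` and this typeset
with a single `g ∈ G`, and elements of `G` carry typesets to typesets; this is (1).

For (2), let `f` be adherent with `F = f[E]`, where `E` is finite because `f` is injective, and let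
`g ∈ G` agree with `f` on `E`. The typeset of `⟨E ▸ g⁻¹ x⟩` is a translate of that of `⟨F ▸ x⟩`,
hence finite, so by (1) its image under `f` is the typeset of `⟨F ▸ f (g⁻¹ x)⟩`. Any `h ∈ G`
agreeing with `f` on `E ∪ {g⁻¹ x}` yields an element `h g⁻¹` of the pointwise stabilizer of `F`
moving `x` to `f (g⁻¹ x)`, so this typeset is the one of `⟨F ▸ x⟩`, which therefore lies in
the range of `f`.
-/

section Typeset

open Equiv Set

variable {U : Type*} {G : Subgroup (Perm U)} {F : Set U} {x y : U} {f : U → U} {g : Perm U}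

/-- The typeset `G⟨F ▸ x⟩`: the orbit of `x` under the pointwise stabilizer of `F` in `G`, spelled
out so that the quantifier ranges over permutations in `G` rather than over a subgroup of `↥G`. -/
def typeset (G : Subgroup (Perm U)) (F : Set U) (x : U) : Set U :=
  {y | ∃ g ∈ G, (∀ a ∈ F, g a = a) ∧ g x = y}

theorem typeset_eq_orbit : typeset G F x = MulAction.orbit (fixingSubgroup G F) x := by
  ext y
  simp [typeset, MulAction.mem_orbit_iff, mem_fixingSubgroup_iff, Subgroup.smul_def,
    and_left_comm]

theorem mem_typeset_self : x ∈ typeset G F x :=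
  typeset_eq_orbit ▸ MulAction.mem_orbit_self x

theorem typeset_eq_of_mem (hy : y ∈ typeset G F x) : typeset G F y = typeset G F x := by
  rw [typeset_eq_orbit] at hy
  simpa only [typeset_eq_orbit] using MulAction.orbit_eq_iff.mpr hy

theorem mapsTo_typeset (hg : g ∈ G) : MapsTo g (typeset G F x) (typeset G (g '' F) (g x)) := by
  rintro _ ⟨k, hk, hkF, rfl⟩
  refine ⟨g * k * g⁻¹, G.mul_mem (G.mul_mem hg hk) (G.inv_mem hg), ?_, by simp⟩
  rintro _ ⟨a, ha, rfl⟩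
  simp [hkF a ha]

theorem image_typeset_of_mem (hg : g ∈ G) : g '' typeset G F x = typeset G (g '' F) (g x) := by
  refine (mapsTo_typeset hg).image_subset.antisymm fun y hy => ⟨g⁻¹ y, ?_, by simp⟩
  simpa [image_image] using mapsTo_typeset (G.inv_mem hg) hy

namespace IsAdherent

theorem exists_eqOn {s : Set U} (hf : IsAdherent G f) (hs : s.Finite) : ∃ g ∈ G, EqOn f g s := by
  obtain ⟨g, hg, hfg⟩ := hf hs.toFinset
  exact ⟨g, hg, fun a ha => hfg a (hs.mem_toFinset.mpr ha)⟩

theorem injective (hf : IsAdherent G f) : Function.Injective f := by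
  intro a b hab
  obtain ⟨g, -, hfg⟩ := hf.exists_eqOn (toFinite {a, b})
  have ha : f a = g a := hfg (mem_insert a {b})
  have hb : f b = g b := hfg (mem_insert_of_mem a rfl)
  exact g.injective (by rw [← ha, ← hb, hab])

theorem image_typeset (hf : IsAdherent G f) (hF : F.Finite) (hfin : (typeset G F x).Finite) :
    f '' typeset G F x = typeset G (f '' F) (f x) := by
  obtain ⟨g, hg, hfg⟩ := hf.exists_eqOn (hF.union hfin)
  have hfgF : EqOn f g F := hfg.mono subset_union_left
  have hfgT : EqOn f g (typeset G F x) := hfg.mono subset_union_right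
  rw [hfgT.image_eq, hfgF.image_eq, hfgT mem_typeset_self, image_typeset_of_mem hg]

theorem apply_mem_typeset (hf : IsAdherent G f) (hF : F.Finite) (hg : g ∈ G) (hfg : EqOn f g F) :
    f x ∈ typeset G (f '' F) (g x) := by
  obtain ⟨h, hh, hfh⟩ := hf.exists_eqOn (hF.insert x)
  refine ⟨h * g⁻¹, G.mul_mem hh (G.inv_mem hg), ?_, by simp [hfh (mem_insert x F)]⟩
  rintro _ ⟨a, ha, rfl⟩
  calc (h * g⁻¹) (f a) = h a := by simp [hfg ha]
    _ = f a := (hfh (mem_insert_of_mem x ha)).symm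

end IsAdherent

theorem IsCopy.typeset_subset {C : Set U} (hC : IsCopy G C) (hF : F.Finite) (hFC : F ⊆ C)
    (hfin : (typeset G F x).Finite) : typeset G F x ⊆ C := by
  obtain ⟨f, hf, rfl⟩ := hC
  obtain ⟨E, rfl⟩ := subset_range_iff_exists_image_eq.mp hFC
  have hE : E.Finite := hF.of_finite_image hf.injective.injOn
  obtain ⟨g, hg, hfg⟩ := hf.exists_eqOn hE
  obtain ⟨z, rfl⟩ := g.surjective x
  have hz : (typeset G E z).Finite := by
    rw [hfg.image_eq, ← image_typeset_of_mem hg] at hfin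
    exact hfin.of_finite_image g.injective.injOn
  calc typeset G (f '' E) (g z) = typeset G (f '' E) (f z) :=
        (typeset_eq_of_mem (hf.apply_mem_typeset hE hg hfg)).symm
    _ = f '' typeset G E z := (hf.image_typeset hE hz).symm
    _ ⊆ range f := image_subset_range f _

theorem finite_typeset_properties_general (hF : F.Finite) (hfin : (typeset G F x).Finite) :
    (∀ f : U → U, IsAdherent G f → f '' typeset G F x = typeset G (f '' F) (f x)) ∧
      ∀ C : Set U, IsCopy G C → F ⊆ C → typeset G F x ⊆ C :=
  ⟨fun _ hf => hf.image_typeset hF hfin, fun _ hC hFC => hC.typeset_subset hF hFC hfin⟩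

end Typeset

/-- Theorem: if the typeset of `⟨F ▸ x⟩` (the orbit of `x` under the pointwise
stabilizer of `F`) is finite, then (1) for every `f` adherent to `G` its image under `f`
is the orbit of `f x` under the pointwise stabilizer of `f[F]`, and (2) it is contained
in every copy for `G` containing `F`. -/
theorem finite_typeset_properties {U : Type*} [Countable U] [Infinite U]
    (G : Subgroup (Equiv.Perm U)) (F : Finset U) (x : U)
    (hfin : Set.Finite {y | ∃ g ∈ G, (∀ a ∈ F, g a = a) ∧ g x = y}) :
    (∀ f : U → U, IsAdherent G f →
      f '' {y | ∃ g ∈ G, (∀ a ∈ F, g a = a) ∧ g x = y} =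
        {y | ∃ g ∈ G, (∀ a ∈ f '' (↑F : Set U), g a = a) ∧ g (f x) = y}) ∧
    (∀ C : Set U, IsCopy G C → ↑F ⊆ C →
      {y | ∃ g ∈ G, (∀ a ∈ F, g a = a) ∧ g x = y} ⊆ C) :=
  finite_typeset_properties_general F.finite_toSet hfin
end
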